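/- Let Q be a commutative Moufang loop and let φ, ψ be automorphisms of Q with x+φ(x) ∈ Z(Q) and x+ψ(x) ∈ Z(Q) for all x (i.e., φ and ψ are J-central). Then φ∘ψ = ψ∘φ if and only if φ̂∘ψ̂ = ψ̂∘φ̂, where φ̂ is the map x ↦ x+φ(x) and ψ̂ is the map x ↦ x+ψ(x). -/

import Mathlib

/-- A loop: a quasigroup with a two-sided neutral element. -/
structure Loop (Q : Type) where
  add : Q → Q → Q
  zero : Q
  addLeftBij : ∀ x, Function.Bijective fun y => add x y
  addRightBij : ∀ x, Function.Bijective fun y => add y x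
  zero_add : ∀ x, add zero x = x
  add_zero : ∀ x, add x zero = x

namespace Loop

/-- The center of a loop: elements commuting and associating with everything. -/
def center {Q : Type} (L : Loop Q) : Set Q :=
  {z | (∀ x, L.add z x = L.add x z) ∧
       (∀ x y, L.add z (L.add x y) = L.add (L.add z x) y) ∧
       (∀ x y, L.add x (L.add z y) = L.add (L.add x z) y) ∧
       (∀ x y, L.add x (L.add y z) = L.add (L.add x y) z)}

/-- A map `α` is central if `Z(Q) + α(x) = Z(Q) + x` for every `x`. -/
def IsCentral {Q : Type} (L : Loop Q) (α : Q → Q) : Prop :=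
  ∀ x, (fun z => L.add z (α x)) '' L.center = (fun z => L.add z x) '' L.center

/-- Automorphism of a loop: a bijective map respecting the operation. -/
def IsAut {Q : Type} (L : Loop Q) (f : Q → Q) : Prop :=
  Function.Bijective f ∧ ∀ x y, f (L.add x y) = L.add (f x) (f y)

/-- `neg` provides two-sided inverses for the loop. -/
def IsTwoSidedInv {Q : Type} (L : Loop Q) (neg : Q → Q) : Prop :=
  ∀ x, L.add x (neg x) = L.zero ∧ L.add (neg x) x = L.zero

/-- Commutative Moufang loop: commutative and satisfying the Moufang identity. -/
def IsCommMoufang {Q : Type} (L : Loop Q) : Prop :=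
  (∀ x y, L.add x y = L.add y x) ∧
  (∀ x y z, L.add x (L.add y (L.add x z)) = L.add (L.add (L.add x y) x) z)

end Loop

open Loop in
/-- J-central automorphisms of a commutative Moufang loop commute iff their
hats commute. -/
theorem stmt {Q : Type} (L : Loop Q) (h : L.IsCommMoufang)
    (φ ψ : Q → Q) (hφ : L.IsAut φ) (hψ : L.IsAut ψ)
    (hφc : ∀ x, L.add x (φ x) ∈ L.center)
    (hψc : ∀ x, L.add x (ψ x) ∈ L.center) :
    φ ∘ ψ = ψ ∘ φ ↔
      (fun x => L.add x (φ x)) ∘ (fun x => L.add x (ψ x)) =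
        (fun x => L.add x (ψ x)) ∘ (fun x => L.add x (φ x)) := by
  have key : ∀ x w, L.add (L.add x (ψ x)) (L.add (φ x) w)
      = L.add (L.add x (φ x)) (L.add (ψ x) w) := by
    intro x w
    obtain ⟨-, a2, a3, -⟩ := hψc x
    obtain ⟨-, b2, b3, -⟩ := hφc x
    rw [a2, b2]
    congr 1
    apply (L.addLeftBij x).1
    show L.add x (L.add (L.add x (ψ x)) (φ x)) = L.add x (L.add (L.add x (φ x)) (ψ x))
    rw [a3, b3, h.1 x (L.add x (ψ x)), h.1 x (L.add x (φ x)), ← a2, ← b2, h.1]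
  constructor
  · intro e
    funext x
    have ex : φ (ψ x) = ψ (φ x) := congrFun e x
    show L.add (L.add x (ψ x)) (φ (L.add x (ψ x))) = L.add (L.add x (φ x)) (ψ (L.add x (φ x)))
    rw [hφ.2, hψ.2, ex, key]
  · intro e
    funext x
    have ex : L.add (L.add x (ψ x)) (φ (L.add x (ψ x)))
        = L.add (L.add x (φ x)) (ψ (L.add x (φ x))) := congrFun e x
    rw [hφ.2, hψ.2, key] at ex
    exact (L.addLeftBij _).1 ((L.addLeftBij _).1 ex)
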